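/- arXiv:2509.13973 — 7 statements merged into one kernel-verified Lean document; each statement's English description precedes it below -/
import Mathlib

section
/- Let f : Q ⟶ R be a morphism in the category Quiv of quivers (a prefunctor). Then f is a monomorphism in Quiv if and only if its object map f.obj is injective and the induced map on total arrow types, sending ⟨a, b, x⟩ to ⟨f.obj a, f.obj b, f.map x⟩, is injective. -/
open CategoryTheory

/-- The map induced by a prefunctor on total arrow types. -/
def totalMap {Q R : Type*} [Quiver Q] [Quiver R] (f : Q ⥤q R) :
    (Σ (a : Q) (b : Q), a ⟶ b) → (Σ (a : R) (b : R), a ⟶ b) :=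
  fun p => ⟨f.obj p.1, f.obj p.2.1, f.map p.2.2⟩

universe v u

theorem quiv_obj_inj_aux {Q R : Quiv.{v, u}} (f : Q ⟶ R) (hf : Mono f) :
    Function.Injective f.obj := by
  intro a b hab
  letI : Quiver.{v} PUnit.{u+1} := ⟨fun _ _ => PEmpty⟩
  let g : PUnit.{u+1} ⥤q Q := { obj := fun _ => a, map := fun {_ _} k => PEmpty.elim k }
  let h : PUnit.{u+1} ⥤q Q := { obj := fun _ => b, map := fun {_ _} k => PEmpty.elim k }
  have e : g ⋙q f = h ⋙q f := by
    refine Prefunctor.ext (fun _ => hab) ?_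
    intro _ _ k
    exact PEmpty.elim k
  have e2 : g = h := hf.right_cancellation (Z := Quiv.of PUnit.{u+1}) g h e
  exact Prefunctor.congr_obj e2 PUnit.unit

/-- A morphism in `Quiv` is a monomorphism iff its object map is injective and its
induced map on total arrow types is injective. -/
theorem quiv_mono_iff {Q R : Quiv} (f : Q ⟶ R) :
    Mono f ↔ Function.Injective f.obj ∧ Function.Injective (totalMap f) := by
  constructor
  · intro hf
    have hobj : Function.Injective f.obj := by
      exact quiv_obj_inj_aux f hf
    refine ⟨hobj, ?_⟩
    rintro ⟨a, b, x⟩ ⟨a', b', y⟩ hxy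
    have h1 : f.obj a = f.obj a' := congrArg Sigma.fst hxy
    have h2 : f.obj b = f.obj b' := congrArg (fun p => p.2.1) hxy
    obtain rfl := hobj h1
    obtain rfl := hobj h2
    have h3 : f.map x = f.map y := by
      have := eq_of_heq (Sigma.mk.inj hxy).2
      exact eq_of_heq (Sigma.mk.inj this).2
    let T : Quiv := ⟨Q, ⟨fun c d => {p : (c ⟶ d) × (c ⟶ d) // f.map p.1 = f.map p.2}⟩⟩
    let g : T ⟶ Q := { obj := fun c => c, map := fun {_ _} k => k.1.1 }
    let h : T ⟶ Q := { obj := fun c => c, map := fun {_ _} k => k.1.2 }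
    have e : g ≫ f = h ≫ f := by
      change Prefunctor.mk _ _ = Prefunctor.mk _ _
      congr 1
      funext c d k
      exact k.2
    have e2 : g = h := (cancel_mono f).1 e
    have e3 : HEq (@Prefunctor.map _ _ _ _ g) (@Prefunctor.map _ _ _ _ h) := by rw [e2]
    have e4 := congrFun (congrFun (congrFun (eq_of_heq e3) a) b) ⟨(x, y), h3⟩
    have e5 : x = y := e4
    rw [e5]
  · rintro ⟨hobj, hmap⟩
    constructor
    intro T g h e
    have ho : g.obj = h.obj := by
      funext c
      exact hobj (Prefunctor.congr_obj e c)
    have hm : ∀ (c d : T) (k : c ⟶ d),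
        (⟨g.obj c, g.obj d, g.map k⟩ : Σ (a : Q) (b : Q), a ⟶ b)
          = ⟨h.obj c, h.obj d, h.map k⟩ := by
      intro c d k
      apply hmap
      exact congrArg (fun (F : T ⥤q R) => totalMap F ⟨c, d, k⟩) e
    obtain ⟨go, gm⟩ := g
    obtain ⟨ho', hm'⟩ := h
    dsimp only at ho hm
    subst ho
    congr 1
    funext c d k
    have := eq_of_heq (Sigma.mk.inj (hm c d k)).2
    exact eq_of_heq (Sigma.mk.inj this).2
end

section
/- Let f : Q ⟶ R be a morphism in the category Quiv of quivers (a prefunctor). Then f is an epimorphism in Quiv if and only if its object map f.obj is surjective and the induced map on total arrow types, sending ⟨a, b, x⟩ to ⟨f.obj a, f.obj b, f.map x⟩, is surjective. -/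
open CategoryTheory

universe v u

/-- Vertices are propositions, exactly one arrow between any two. -/
def QObj : Type u := ULift.{u} Prop

instance : Quiver.{v} QObj.{u} := ⟨fun _ _ => PUnit.{v + 1}⟩

/-- One vertex, arrows are propositions. -/
def QArr : Type u := PUnit.{u + 1}

instance : Quiver.{v} QArr.{u} := ⟨fun _ _ => ULift.{v} Prop⟩

theorem prefunctor_ext_total {V W : Type*} [Quiver V] [Quiver W] (g h : V ⥤q W)
    (ho : ∀ x, g.obj x = h.obj x) (ht : ∀ p, totalMap g p = totalMap h p) : g = h := by
  obtain ⟨go, gm⟩ := g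
  obtain ⟨ho', hm⟩ := h
  obtain rfl : go = ho' := funext ho
  congr 1
  funext X Y x
  have := ht ⟨X, Y, x⟩
  simpa [totalMap] using this

/-- A morphism in `Quiv` is an epimorphism iff its object map is surjective and its
induced map on total arrow types is surjective. -/
theorem quiv_epi_iff {Q R : Quiv} (f : Q ⟶ R) :
    Epi f ↔ Function.Surjective f.obj ∧ Function.Surjective (totalMap f) := by
  constructor
  · intro hf
    constructor
    · let g : R ⟶ Quiv.of QObj :=
        Prefunctor.mk (W := QObj) (fun r => ULift.up (∃ q, f.obj q = r)) (fun _ => PUnit.unit)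
      let h : R ⟶ Quiv.of QObj :=
        Prefunctor.mk (W := QObj) (fun r => ULift.up True) (fun _ => PUnit.unit)
      have e : f ≫ g = f ≫ h := by
        refine Prefunctor.ext (fun X => ?_) (fun X Y x => rfl)
        exact congrArg ULift.up (eq_true ⟨X, rfl⟩)
      have e2 : g = h := (cancel_epi f).1 e
      intro r
      have e3 : g.obj r = h.obj r := by rw [e2]
      exact of_eq_true (congrArg ULift.down e3)
    · let g : R ⟶ Quiv.of QArr :=
        Prefunctor.mk (W := QArr) (fun r => PUnit.unit)
          (fun {a b} x => ULift.up (∃ p, totalMap f p = ⟨a, b, x⟩))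
      let h : R ⟶ Quiv.of QArr :=
        Prefunctor.mk (W := QArr) (fun r => PUnit.unit) (fun _ => ULift.up True)
      have e : f ≫ g = f ≫ h := by
        refine Prefunctor.ext (fun X => rfl) (fun X Y x => ?_)
        exact congrArg ULift.up (eq_true ⟨⟨X, Y, x⟩, rfl⟩)
      have e2 : g = h := (cancel_epi f).1 e
      rintro ⟨a, b, x⟩
      have e3 : g.map x = h.map x := eq_of_heq (by rw [e2])
      exact of_eq_true (congrArg ULift.down e3)
  · rintro ⟨h1, h2⟩
    refine ⟨fun {Z} g h e => ?_⟩
    refine prefunctor_ext_total g h (fun x => ?_) (fun p => ?_)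
    · obtain ⟨q, rfl⟩ := h1 x
      exact Prefunctor.congr_obj e q
    · obtain ⟨q, rfl⟩ := h2 p
      change totalMap (f ≫ g) q = totalMap (f ≫ h) q
      rw [e]
end

section
/- Let G be a nonempty connected groupoid, i.e., for any two objects c, d of G there exists a morphism c ⟶ d, and fix an object λ of G. Then there exists a functor from G to the product category SingleObj (λ ⟶ λ) × Codiscrete (objects of G) that is bijective on objects and bijective on each hom-set (an isomorphism of categories), where λ ⟶ λ carries its vertex-group structure. -/
open CategoryTheory

universe v u

/-- Every connected groupoid is isomorphic (as a category, via a functor bijective on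
objects and on all hom-sets) to the product of the vertex group at a chosen object `l`
(as a one-object groupoid) with the codiscrete (coarse) category on its objects. -/
theorem connected_groupoid_iso_product {G : Type u} [Groupoid.{v} G]
    (hconn : ∀ c d : G, Nonempty (c ⟶ d)) (l : G) :
    ∃ Φ : G ⥤ (SingleObj (l ⟶ l)) × Codiscrete G,
      Function.Bijective Φ.obj ∧
      ∀ c d : G, Function.Bijective (fun x : c ⟶ d => Φ.map x) := by
  classical
  have p : ∀ c : G, l ⟶ c := fun c => (hconn l c).some
  let m : ∀ {c d : G}, (c ⟶ d) → (l ⟶ l) :=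
    fun {c d} f => p d ≫ Groupoid.inv f ≫ Groupoid.inv (p c)
  have m_id : ∀ c : G, m (𝟙 c) = 𝟙 l := by
    intro c
    simp [m]
  have m_comp : ∀ {c d e : G} (f : c ⟶ d) (g : d ⟶ e), m (f ≫ g) = m g ≫ m f := by
    intro c d e f g
    simp [m]
  let Φ : G ⥤ (SingleObj (l ⟶ l)) × Codiscrete G :=
    { obj := fun c => (SingleObj.star _, Codiscrete.mk c)
      map := fun {c d} f => ((m f : l ⟶ l), ())
      map_id := fun c => Prod.ext (m_id c) rfl
      map_comp := fun f g => Prod.ext (m_comp f g) rfl }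
  refine ⟨Φ, ⟨?_, ?_⟩, ?_⟩
  · intro c d h
    exact congrArg (fun z => z.2.as) h
  · rintro ⟨⟨⟩, ⟨c⟩⟩
    exact ⟨c, rfl⟩
  · intro c d
    constructor
    · intro f g h
      have h1 : m f = m g := congrArg Prod.fst h
      have h2 : Groupoid.inv f = Groupoid.inv g := by
        have h3 := congrArg (fun z => Groupoid.inv (p d) ≫ z ≫ p c) h1
        simpa [m] using h3
      have h4 := congrArg (fun z => Groupoid.inv z) h2
      simpa using h4
    · rintro ⟨a, b⟩
      let a' : l ⟶ l := a
      refine ⟨Groupoid.inv (p c) ≫ Groupoid.inv a' ≫ p d, Prod.ext ?_ rfl⟩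
      change m _ = a'
      simp [m]
end

section
/- Let G and H be groupoids and F : G ⥤ H a functor, regarded as a morphism in the category Grpd of groupoids. Then F is an epimorphism in Grpd if and only if the only subgroupoid S of H that contains every arrow in the image of F (i.e., F.map x ∈ S.arrows (F.obj a) (F.obj b) for every arrow x : a ⟶ b of G) is the top subgroupoid ⊤. -/
open CategoryTheory

universe vv uu

/-- One-object groupoid on a group. -/
structure OneObj (K : Type vv) : Type uu where
  mk ::

instance OneObj.grpd (K : Type vv) [Group K] : Groupoid.{vv, uu} (OneObj.{vv, uu} K) where
  Hom _ _ := K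
  id _ := (1 : K)
  comp f g := (f * g : K)
  id_comp f := one_mul (f : K)
  comp_id f := mul_one (f : K)
  assoc f g h := mul_assoc (f : K) g h
  inv f := (f⁻¹ : K)
  inv_comp f := inv_mul_cancel (f : K)
  comp_inv f := mul_inv_cancel (f : K)

/-- The functor given by a multiplicative map. -/
def OneObj.fn {H : Grpd.{vv, uu}} {K : Type vv} [Group K] (m : ∀ {c d : H}, (c ⟶ d) → K)
    (hm : ∀ {c d e : H} (f : c ⟶ d) (g : d ⟶ e), m (f ≫ g) = m f * m g) :
    H ⥤ OneObj.{vv, uu} K where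
  obj _ := ⟨⟩
  map f := m f
  map_id c := by
    have := hm (𝟙 c) (𝟙 c)
    rw [Category.comp_id] at this
    exact (left_eq_mul.mp this)
  map_comp f g := hm f g

theorem cocycle_eq {G H : Grpd.{vv, uu}} (F : G ⟶ H) [Epi F] {K : Type vv} [Group K]
    (m n : ∀ {c d : H}, (c ⟶ d) → K)
    (hm : ∀ {c d e : H} (f : c ⟶ d) (g : d ⟶ e), m (f ≫ g) = m f * m g)
    (hn : ∀ {c d e : H} (f : c ⟶ d) (g : d ⟶ e), n (f ≫ g) = n f * n g)
    (h : ∀ (a b : G) (x : a ⟶ b), m (F.map x) = n (F.map x)) {c d : H} (f : c ⟶ d) :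
    m f = n f := by
  let A : H ⟶ Grpd.of (OneObj.{vv, uu} K) := OneObj.fn m hm
  let B : H ⟶ Grpd.of (OneObj.{vv, uu} K) := OneObj.fn n hn
  have e : A = B := by
    rw [← cancel_epi F]
    refine CategoryTheory.Functor.hext (fun _ => rfl) fun a b x => heq_of_eq (h a b x)
  exact congrArg (fun C : H ⥤ OneObj.{vv, uu} K => (show K from C.map f)) e

/-- The codiscrete groupoid on two objects. -/
structure TwoObj : Type uu where
  val : Prop

instance TwoObj.grpd : Groupoid.{vv, uu} TwoObj.{uu} where
  Hom _ _ := PUnit.{vv+1}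
  id _ := ⟨⟩
  comp _ _ := ⟨⟩
  inv _ := ⟨⟩

theorem wide_of_epi {G H : Grpd.{vv, uu}} (F : G ⟶ H) [Epi F] (p : H → Prop)
    (h : ∀ a : G, p (F.obj a)) (c : H) : p c := by
  let A' : H ⥤ TwoObj.{uu} := { obj := fun x => ⟨p x⟩, map := fun _ => PUnit.unit.{vv+1} }
  let B' : H ⥤ TwoObj.{uu} := { obj := fun x => ⟨True⟩, map := fun _ => PUnit.unit.{vv+1} }
  let A : H ⟶ Grpd.of.{vv, uu} TwoObj.{uu} := A'
  let B : H ⟶ Grpd.of.{vv, uu} TwoObj.{uu} := B'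
  have e : A = B := by
    rw [← cancel_epi F]
    exact CategoryTheory.Functor.ext
      (fun a => congrArg TwoObj.mk (eq_true (h a))) fun _ _ _ => rfl
  exact of_eq_true (congrArg TwoObj.val (Functor.congr_obj e c))

theorem grpd_gen_of_epi {G H : Grpd.{vv, uu}} (F : G ⟶ H) [Epi F] (S : Subgroupoid H)
    (hS : ∀ (a b : G) (x : a ⟶ b), F.map x ∈ S.arrows (F.obj a) (F.obj b)) : S = ⊤ := by
  classical
  have wide : ∀ c : H, 𝟙 c ∈ S.arrows c c := by
    refine wide_of_epi F _ fun a => ?_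
    have := hS a a (𝟙 a)
    rwa [F.map_id] at this
  have conn : ∀ {c d : H} (f : c ⟶ d), (S.arrows c d).Nonempty := by
    intro c d f
    let φ : H → Multiplicative (ULift.{vv} ℤ) := fun x =>
      .ofAdd ⟨if (S.arrows c x).Nonempty then 1 else 0⟩
    have hφ : ∀ {x y : H} (g : x ⟶ y), g ∈ S.arrows x y → φ x = φ y := by
      intro x y g hg
      have : (S.arrows c x).Nonempty ↔ (S.arrows c y).Nonempty :=
        ⟨fun ⟨k, hk⟩ => ⟨_, S.mul hk hg⟩, fun ⟨k, hk⟩ => ⟨_, S.mul hk (S.inv hg)⟩⟩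
      simp only [φ, this]
    have := cocycle_eq F (K := Multiplicative (ULift.{vv} ℤ))
      (fun {x y} _ => (φ x)⁻¹ * φ y) (fun _ => 1)
      (fun _ _ => by group) (fun _ _ => by simp)
      (fun a b x => by simp [hφ _ (hS a b x)]) f
    have h2 : φ c = φ d := inv_mul_eq_one.mp this
    by_contra hne
    have hc : (S.arrows c c).Nonempty := ⟨_, wide c⟩
    have h3 := congrArg (fun z => (Multiplicative.toAdd z).down) h2
    simp [φ, hc, hne] at h3
  have vert : ∀ (c : H) (g : c ⟶ c), g ∈ S.arrows c c := by
    intro c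
    let U : Subgroup (c ⟶ c) := S.vertexSubgroup ⟨_, wide c⟩
    let t : ∀ d : H, (S.arrows c d).Nonempty → (c ⟶ d) := fun d hd => hd.choose
    have ht : ∀ d hd, t d hd ∈ S.arrows c d := fun d hd => hd.choose_spec
    let r : ∀ {d e : H}, (d ⟶ e) → (c ⟶ c) := fun {d e} f =>
      if h : (S.arrows c d).Nonempty then
        t d h ≫ f ≫ Groupoid.inv (t e (conn (t d h ≫ f))) else 𝟙 c
    have hr : ∀ {x y z : H} (f : x ⟶ y) (g : y ⟶ z), r (f ≫ g) = r f * r g := by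
      intro x y z f g
      by_cases h : (S.arrows c x).Nonempty
      · have h' : (S.arrows c y).Nonempty := conn (t x h ≫ f)
        simp only [r, h, h', dif_pos]
        change _ = _ ≫ _
        simp
      · have h' : ¬ (S.arrows c y).Nonempty := fun ⟨k, _⟩ => h (conn (k ≫ Groupoid.inv f))
        simp only [r, h, h', dif_neg, not_false_eq_true]
        change _ = _ ≫ _
        simp
    have hrS : ∀ {x y : H} (f : x ⟶ y), f ∈ S.arrows x y → r f ∈ U := by
      intro x y f hf
      by_cases h : (S.arrows c x).Nonempty
      · simp only [r, h, dif_pos]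
        exact S.mul (ht _ _) (S.mul hf (S.inv (ht _ _)))
      · simp only [r, h, dif_neg, not_false_eq_true]
        exact wide c
    have epi : Epi (GrpCat.ofHom U.subtype) := by
      refine ⟨fun {K} φ ψ hh => ?_⟩
      have hU : ∀ u ∈ U, φ u = ψ u := fun u hu =>
        congrArg (fun q : GrpCat.of U ⟶ K => q ⟨u, hu⟩) hh
      ext g
      have hc : (S.arrows c c).Nonempty := ⟨_, wide c⟩
      have := cocycle_eq F (K := K) (fun f => φ (r f)) (fun f => ψ (r f))
        (fun f g => by rw [hr]; exact map_mul φ.hom _ _)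
        (fun f g => by rw [hr]; exact map_mul ψ.hom _ _)
        (fun a b x => hU _ (hrS _ (hS a b x))) (Groupoid.inv (t c hc) ≫ g ≫ t c hc)
      have e : r (Groupoid.inv (t c hc) ≫ g ≫ t c hc) = g := by
        simp [r, hc]
      simpa only [e] using this
    intro g
    obtain ⟨u, hu⟩ := GrpCat.surjective_of_epi (GrpCat.ofHom U.subtype) g
    rw [← hu]
    exact u.2
  ext c d f
  refine ⟨fun _ => trivial, fun _ => ?_⟩
  obtain ⟨s, hs⟩ := conn f
  exact (S.mul_mem_cancel_right (S.inv hs)).mp (vert c (f ≫ Groupoid.inv s))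

theorem grpd_epi_of_gen {G H : Grpd.{vv, uu}} (F : G ⟶ H)
    (h : ∀ S : Subgroupoid H,
        (∀ (a b : G) (x : a ⟶ b), F.map x ∈ S.arrows (F.obj a) (F.obj b)) → S = ⊤) : Epi F := by
  refine ⟨fun {K} A B e => ?_⟩
  let S : Subgroupoid H :=
    { arrows := fun c d => {f | ∃ (p : A.obj c = B.obj c) (q : A.obj d = B.obj d),
        A.map f = eqToHom p ≫ B.map f ≫ eqToHom q.symm}
      inv := by
        rintro c d f ⟨p, q, hf⟩
        refine ⟨q, p, ?_⟩
        simp only [Groupoid.inv_eq_inv, Functor.map_inv, hf]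
        simp
      mul := by
        rintro c d e f ⟨p, q, hf⟩ g ⟨_, q', hg⟩
        refine ⟨p, q', ?_⟩
        simp [hf, hg] }
  have hS : S = ⊤ := h S fun a b x =>
    ⟨Functor.congr_obj e a, Functor.congr_obj e b, Functor.congr_hom e x⟩
  have key : ∀ {c d : H} (f : c ⟶ d), f ∈ S.arrows c d := by
    intro c d f; rw [hS]; trivial
  exact CategoryTheory.Functor.ext (fun c => (key (𝟙 c)).1) fun c d f => (key f).2.2

/-- A functor between groupoids is an epimorphism in `Grpd` iff the only subgroupoid of the
target containing all arrows in its image is the top subgroupoid. -/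
theorem grpd_epi_iff_generates {G H : Grpd} (F : G ⟶ H) :
    Epi F ↔
      ∀ S : Subgroupoid H,
        (∀ (a b : G) (x : a ⟶ b), F.map x ∈ S.arrows (F.obj a) (F.obj b)) → S = ⊤ :=
  ⟨fun _ S hS => grpd_gen_of_epi F S hS, grpd_epi_of_gen F⟩
end

section
/- Let f : Λ → Μ be a surjective map and e a setoid on Λ. Then the pushforward of e along f equals the top setoid on Μ if and only if the join e ⊔ Setoid.ker f equals the top setoid on Λ (where Setoid.ker f relates a and b exactly when f a = f b, and the join is taken in the complete lattice of setoids on Λ). -/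
/-- The pushforward of a setoid `e` on `Λ` along a map `f : Λ → Μ`: the equivalence
relation on `Μ` generated by relating `f a` and `f b` whenever `e` relates `a` and `b`. -/
def Setoid.pushforward {Λ Μ : Type*} (f : Λ → Μ) (e : Setoid Λ) : Setoid Μ :=
  Relation.EqvGen.setoid (fun x y => ∃ a b : Λ, e.r a b ∧ f a = x ∧ f b = y)

/-- For a surjective map `f`, the pushforward of `e` along `f` is the top setoid iff the
join of `e` with the kernel of `f` is the top setoid. -/
theorem pushforward_top_iff_sup_ker_top {Λ Μ : Type*} (f : Λ → Μ)
    (hf : Function.Surjective f) (e : Setoid Λ) :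
    Setoid.pushforward f e = ⊤ ↔ e ⊔ Setoid.ker f = ⊤ := by
  rw [Setoid.eq_top_iff, Setoid.eq_top_iff]
  constructor
  · intro h a b
    have hk : ∀ a b, f a = f b → (e ⊔ Setoid.ker f) a b := fun a b hab =>
      (le_sup_right : Setoid.ker f ≤ e ⊔ Setoid.ker f) hab
    have he : ∀ a b, e a b → (e ⊔ Setoid.ker f) a b := fun a b hab =>
      (le_sup_left : e ≤ e ⊔ Setoid.ker f) hab
    have key : ∀ x y, Relation.EqvGen (fun x y => ∃ a b : Λ, e.r a b ∧ f a = x ∧ f b = y) x y →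
        ∀ a b, f a = x → f b = y → (e ⊔ Setoid.ker f) a b := by
      intro x y hxy
      induction hxy with
      | rel x y h =>
        obtain ⟨c, d, hcd, rfl, rfl⟩ := h
        intro a b ha hb
        exact Setoid.trans' _ (hk a c ha) (Setoid.trans' _ (he c d hcd) (hk d b hb.symm))
      | refl x =>
        intro a b ha hb
        exact hk a b (ha.trans hb.symm)
      | symm x y _ ih =>
        intro a b ha hb
        exact Setoid.symm' _ (ih b a hb ha)
      | trans x y z _ _ ih1 ih2 =>
        intro a b ha hb
        obtain ⟨c, hc⟩ := hf y
        exact Setoid.trans' _ (ih1 a c ha hc) (ih2 c b hc hb)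
    exact key _ _ (h (f a) (f b)) a b rfl rfl
  · intro h x y
    obtain ⟨a, rfl⟩ := hf x
    obtain ⟨b, rfl⟩ := hf y
    have hle : e ⊔ Setoid.ker f ≤ Setoid.comap f (Setoid.pushforward f e) := by
      apply sup_le
      · intro a b hab
        exact Relation.EqvGen.rel _ _ ⟨a, b, hab, rfl, rfl⟩
      · intro a b hab
        have hab' : f a = f b := hab
        change Setoid.pushforward f e (f a) (f b)
        rw [hab']
    exact hle (h a b)
end

section
/- Let f : Λ → Μ be a surjective map and e_G a setoid on Λ whose pushforward along f is the top setoid on Μ. Let Ν be a type, e_R a setoid on Ν, and r : Ν → Μ a map such that r x = r y implies e_R relates x and y, for all x, y : Ν. Let ξ : Λ → Ν be a map with r ∘ ξ = f such that e_G a b implies e_R (ξ a) (ξ b). Then for all a, b : Λ, e_R relates ξ a and ξ b. -/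
/-- If the pushforward of `e_G` along the surjection `f` is the top setoid, `r ∘ ξ = f`,
`r x = r y` implies `e_R x y`, and `ξ` maps `e_G`-related elements to `e_R`-related ones,
then the images under `ξ` of any two elements are `e_R`-related. -/
theorem images_related_of_pushforward_top {Λ Μ Ν : Type*} (f : Λ → Μ)
    (hf : Function.Surjective f) (eG : Setoid Λ)
    (hpush : Setoid.pushforward f eG = ⊤)
    (eR : Setoid Ν) (r : Ν → Μ)
    (hr : ∀ x y : Ν, r x = r y → eR.r x y)
    (ξ : Λ → Ν) (hcomm : r ∘ ξ = f)
    (hξ : ∀ a b : Λ, eG.r a b → eR.r (ξ a) (ξ b)) :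
    ∀ a b : Λ, eR.r (ξ a) (ξ b) := by
  have hfr : ∀ a : Λ, r (ξ a) = f a := fun a => congrFun hcomm a
  have hsame : ∀ a b : Λ, f a = f b → eR.r (ξ a) (ξ b) := fun a b h =>
    hr _ _ (by rw [hfr, hfr, h])
  have key : ∀ x y : Μ,
      Relation.EqvGen (fun x y => ∃ a b : Λ, eG.r a b ∧ f a = x ∧ f b = y) x y →
      ∀ a b : Λ, f a = x → f b = y → eR.r (ξ a) (ξ b) := by
    intro x y h
    induction h with
    | rel x y h =>
      obtain ⟨c, d, hcd, hc, hd⟩ := h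
      intro a b ha hb
      exact eR.iseqv.trans (hsame a c (ha.trans hc.symm))
        (eR.iseqv.trans (hξ c d hcd) (hsame d b (hd.trans hb.symm)))
    | refl x => exact fun a b ha hb => hsame a b (ha.trans hb.symm)
    | symm x y _ ih => exact fun a b ha hb => eR.iseqv.symm (ih b a hb ha)
    | trans x y z _ _ ih1 ih2 =>
      intro a b ha hb
      obtain ⟨c, hc⟩ := hf y
      exact eR.iseqv.trans (ih1 a c ha hc) (ih2 c b hc hb)
  intro a b
  have h : (Setoid.pushforward f eG).r (f a) (f b) := by
    rw [hpush]
    trivial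
  exact key _ _ h a b rfl rfl
end

section
/- Let G and H be groupoids, π : G ⥤ H and σ : H ⥤ G functors with σ ⋙ π = 𝟭 H and σ.obj (π.obj c) = c for every object c of G. For an arrow x : c ⟶ d of G, let a_x : c ⟶ d denote eqToHom (c = σ.obj (π.obj c)) ≫ σ.map (π.map x) ≫ eqToHom (σ.obj (π.obj d) = d), and let n_x : c ⟶ c be the unique loop with π.map n_x = 𝟙 (π.obj c) and x = n_x ≫ a_x. Then for all composable arrows x : c ⟶ d and y : d ⟶ e of G, one has n_{x ≫ y} = n_x ≫ a_x ≫ n_y ≫ Groupoid.inv a_x; that is, the kernel components multiply by the crossed-product (semidirect-product) rule, the section acting on kernel loops by conjugation. -/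
open CategoryTheory

/-- For a split epimorphism of groupoids `π : G ⥤ H` with section `σ` fixing the objects of
`G`, writing each arrow `x : c ⟶ d` uniquely as `x = n_x ≫ a_x` with `π.map n_x` an identity
and `a_x = eqToHom ≫ σ.map (π.map x) ≫ eqToHom`, the kernel components multiply by the
crossed-product rule: `n_{x ≫ y} = n_x ≫ a_x ≫ n_y ≫ inv a_x`. -/
theorem split_epi_kernel_crossed_product_rule {G H : Type*} [Groupoid G] [Groupoid H]
    (π : G ⥤ H) (σ : H ⥤ G) (hsplit : σ ⋙ π = Functor.id H)
    (hfix : ∀ c : G, σ.obj (π.obj c) = c)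
    (n : ∀ (c d : G), (c ⟶ d) → (c ⟶ c))
    (hker : ∀ (c d : G) (x : c ⟶ d), π.map (n c d x) = 𝟙 (π.obj c))
    (hfact : ∀ (c d : G) (x : c ⟶ d),
      x = n c d x ≫ (eqToHom (hfix c).symm ≫ σ.map (π.map x) ≫ eqToHom (hfix d))) :
    ∀ (c d e : G) (x : c ⟶ d) (y : d ⟶ e),
      n c e (x ≫ y) =
        n c d x ≫
          (eqToHom (hfix c).symm ≫ σ.map (π.map x) ≫ eqToHom (hfix d)) ≫
            n d e y ≫
              Groupoid.inv (eqToHom (hfix c).symm ≫ σ.map (π.map x) ≫ eqToHom (hfix d)) := by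
  intro c d e x y
  have hA : eqToHom (hfix c).symm ≫ σ.map (π.map (x ≫ y)) ≫ eqToHom (hfix e) =
      (eqToHom (hfix c).symm ≫ σ.map (π.map x) ≫ eqToHom (hfix d)) ≫
        (eqToHom (hfix d).symm ≫ σ.map (π.map y) ≫ eqToHom (hfix e)) := by
    simp
  have h1 := hfact c e (x ≫ y)
  have h2 := hfact c d x
  have h3 := hfact d e y
  rw [hA] at h1
  generalize eqToHom (hfix c).symm ≫ σ.map (π.map x) ≫ eqToHom (hfix d) = a at *
  generalize eqToHom (hfix d).symm ≫ σ.map (π.map y) ≫ eqToHom (hfix e) = b at *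
  rw [← cancel_mono (a ≫ b), ← h1]
  have h4 : x ≫ y = (n c d x ≫ a) ≫ (n d e y ≫ b) := by
    rw [← h2, ← h3]
  rw [h4]
  simp
end
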